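/- Let G be the group presented by the generating set S and relation set R of Theorem 2.14 (the presentation of the virtual Thompson group VF) as described in the context. Then the abelianization of G (the quotient of G by its commutator subgroup) is a free abelian group, i.e. it is isomorphic to a direct sum of copies of ℤ. -/

import Mathlib

/-- The alphabet Σ = {x, v}. -/
inductive Letter : Type
  | x | v
deriving DecidableEq

/-- Words on Σ (possibly empty). -/
abbrev Word := List Letter

/-- A target word t ∈ {xx, xv, vx, vv}, encoded as the pair of its two letters. -/
abbrev Tgt := Letter × Letter

/-- The word (of length two) corresponding to a target. -/
def tw (t : Tgt) : Word := [t.1, t.2]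

/-- Index for the three generators of family (i): X_{v→vv}, X_{v→vx}, X_{v→xv}. -/
inductive G1 : Type
  | vv   -- X_{v→vv}
  | vx   -- X_{v→vx}
  | xv   -- X_{v→xv}
deriving DecidableEq

/-- Index for the four kinds of generators of family (iii):
X_{x→vv,u}, X_{x→vx,u}, X_{v→xx,u}, X_{v→xv,u}. -/
inductive G3 : Type
  | xvv  -- X_{x→vv,u}
  | xvx  -- X_{x→vx,u}
  | vxx  -- X_{v→xx,u}
  | vxv  -- X_{v→xv,u}
deriving DecidableEq

/-- The generating set S of the presentation of the virtual Thompson group VF. -/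
inductive Gen : Type
  /-- family (i): X_{v→vv}, X_{v→vx}, X_{v→xv} -/
  | fam1 : G1 → Gen
  /-- family (ii): X_{a, s→t, u} with a ∈ {x,v}, s ∈ {x,v}, t ∈ {xx,xv,vx,vv}, u any word -/
  | fam2 : Letter → Letter → Tgt → Word → Gen
  /-- family (iii): X_{c, u} with c one of x→vv, x→vx, v→xx, v→xv and u a nonempty word -/
  | fam3 : G3 → {u : Word // u ≠ []} → Gen

/-- The corresponding generator of the free group on S. -/
def X (g : Gen) : FreeGroup Gen := FreeGroup.of g

open Letter in
/-- The relators of the presentation of VF (each relation A·B = C·D becomes the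
relator A·B·(C·D)⁻¹). -/
inductive VFRel : FreeGroup Gen → Prop
  /-- (R1) and (R2): for a ∈ {x, v},
  X_{a,s₁→t₁, p s₂ q} X_{a,s₂→t₂, q} = X_{a,s₂→t₂, q} X_{a,s₁→t₁, p t₂ q}. -/
  | r12 (a s₁ s₂ : Letter) (t₁ t₂ : Tgt) (p q : Word) :
      VFRel (X (.fam2 a s₁ t₁ (p ++ [s₂] ++ q)) * X (.fam2 a s₂ t₂ q) *
        (X (.fam2 a s₂ t₂ q) * X (.fam2 a s₁ t₁ (p ++ tw t₂ ++ q)))⁻¹)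
  /-- (R3): X_{x,s→t,q} X_{x→vv, p t q} = X_{x→vv, p s q} X_{v,s→t,q}. -/
  | r3 (s : Letter) (t : Tgt) (p q : Word) :
      VFRel (X (.fam2 x s t q) * X (.fam3 .xvv ⟨p ++ tw t ++ q, by simp [tw]⟩) *
        (X (.fam3 .xvv ⟨p ++ [s] ++ q, by simp⟩) * X (.fam2 v s t q))⁻¹)
  /-- (R4): X_{x,s→t,q} X_{x→vx, p t q} = X_{x→vx, p s q} X_{v,s→t,q}. -/
  | r4 (s : Letter) (t : Tgt) (p q : Word) :
      VFRel (X (.fam2 x s t q) * X (.fam3 .xvx ⟨p ++ tw t ++ q, by simp [tw]⟩) *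
        (X (.fam3 .xvx ⟨p ++ [s] ++ q, by simp⟩) * X (.fam2 v s t q))⁻¹)
  /-- (R5): X_{v,s→t,q} X_{v→xx, p t q} = X_{v→xx, p s q} X_{x,s→t,q}. -/
  | r5 (s : Letter) (t : Tgt) (p q : Word) :
      VFRel (X (.fam2 v s t q) * X (.fam3 .vxx ⟨p ++ tw t ++ q, by simp [tw]⟩) *
        (X (.fam3 .vxx ⟨p ++ [s] ++ q, by simp⟩) * X (.fam2 x s t q))⁻¹)
  /-- (R6): X_{v,s→t,q} X_{v→xv, p t q} = X_{v→xv, p s q} X_{x,s→t,q}. -/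
  | r6 (s : Letter) (t : Tgt) (p q : Word) :
      VFRel (X (.fam2 v s t q) * X (.fam3 .vxv ⟨p ++ tw t ++ q, by simp [tw]⟩) *
        (X (.fam3 .vxv ⟨p ++ [s] ++ q, by simp⟩) * X (.fam2 x s t q))⁻¹)

/-- The set of relators. -/
def VFrels : Set (FreeGroup Gen) := {g | VFRel g}

/-- The virtual Thompson group VF, as the presented group ⟨S | R⟩. -/
abbrev VF := PresentedGroup VFrels

/-!
The relations of the presentation of VF become linear after abelianization. Relations R1, R2 say
that `X_{a, s → t, u}` depends on `u` only through whether `u` is empty. With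
`δ = X_{x, s → t, q} - X_{v, s → t, q}`, relations R3–R6 say that replacing the factor `s` of
`p s q` by `t` changes `X_{c, p s q}` by `-δ` if `c` is `x → vv` or `x → vx`, and by `δ` if `c` is
`v → xx` or `v → xv`. Hence the four functions `u ↦ X_{c, u}` agree up to sign and additive
constants, and since `δ` does not depend on `p`, each is, up to a constant, a sum of one weight per
letter in which only the last letter is treated separately. This leaves finitely many generators of
the abelianization. They are independent because the sum-of-weights formula, with arbitrary values
for these generators, conversely satisfies all relations.
-/

section Words

variable {α M : Type*}

theorem apply_eq_apply_singleton_of_split_invariant {β : Type*} (F : {u : List α // u ≠ []} → β)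
    (hF : ∀ a b c q, F ⟨a :: q, by simp⟩ = F ⟨b :: c :: q, by simp⟩)
    (u : {u : List α // u ≠ []}) (a : α) : F u = F ⟨[a], by simp⟩ := by
  obtain ⟨_ | ⟨b, q⟩, hu⟩ := u
  · exact absurd rfl hu
  · induction q generalizing b with
    | nil => exact (hF b a a []).trans (hF a a a []).symm
    | cons c q ih => exact (hF b b c q).symm.trans (ih b (by simp))

/-- The sum of the weights of the letters of a word, where the last letter is weighted by `g` and
all others by `f`. -/
def weightSum [AddZeroClass M] (f g : α → M) : List α → M
  | [] => 0
  | [a] => g a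
  | a :: b :: u => f a + weightSum f g (b :: u)

theorem weightSum_cons [AddZeroClass M] (f g : α → M) (a : α) {u : List α} (hu : u ≠ []) :
    weightSum f g (a :: u) = f a + weightSum f g u := by
  cases u with
  | nil => exact absurd rfl hu
  | cons b u => rfl

theorem weightSum_append_sub_weightSum_append [AddCommGroup M] (f g : α → M) (p : List α)
    {u w : List α} (hu : u ≠ []) (hw : w ≠ []) :
    weightSum f g (p ++ u) - weightSum f g (p ++ w) = weightSum f g u - weightSum f g w := by
  induction p with
  | nil => rfl
  | cons a p ih =>
    rw [List.cons_append, List.cons_append, weightSum_cons f g a (by simp [hu]),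
      weightSum_cons f g a (by simp [hw]), add_sub_add_left_eq_sub, ih]

end Words

section Presentations

variable {α : Type*} {rels : Set (FreeGroup α)}

theorem mem_of_forall_abelianization_of_mem
    (S : AddSubgroup (Additive (Abelianization (PresentedGroup rels))))
    (hS : ∀ a, Additive.ofMul (Abelianization.of (PresentedGroup.of a)) ∈ S)
    (y : Additive (Abelianization (PresentedGroup rels))) : y ∈ S := by
  obtain ⟨z, rfl⟩ := QuotientGroup.mk_surjective y.toMul
  exact PresentedGroup.generated_by rels (S.toSubgroup'.comap Abelianization.of) hS z

theorem lift_ofAdd_mul_mul_inv_eq_one_iff {M : Type*} [AddCommGroup M] (f : α → M) (a b c d : α) :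
    FreeGroup.lift (fun g => Multiplicative.ofAdd (f g))
      (.of a * .of b * (.of c * .of d)⁻¹) = 1 ↔ f a + f b = f c + f d := by
  simp only [map_mul, map_inv, FreeGroup.lift_apply_of, mul_inv_eq_one, ← ofAdd_add,
    Multiplicative.ofAdd.injective.eq_iff]

end Presentations

namespace VF

open Letter

/-- The class in the (additively written) abelianization of VF of a generator. -/
def gen (g : Gen) : Additive (Abelianization VF) :=
  Additive.ofMul (Abelianization.of (PresentedGroup.of g))

/-- `1` for the generators `X_{x → vv, u}`, `X_{x → vx, u}` and `-1` for `X_{v → xx, u}`,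
`X_{v → xv, u}`: the sign with which relations R3–R6 relate them to the family (ii). -/
def sign : G3 → ℤ
  | .xvv | .xvx => 1
  | .vxx | .vxv => -1

theorem gen_add_gen {a b c d : Gen} (h : VFRel (X a * X b * (X c * X d)⁻¹)) :
    gen a + gen b = gen c + gen d := by
  have hmk : PresentedGroup.mk VFrels (X a * X b) = PresentedGroup.mk VFrels (X c * X d) :=
    PresentedGroup.mk_eq_mk_of_mul_inv_mem h
  exact congrArg (fun z => Additive.ofMul (Abelianization.of z)) hmk

theorem gen_fam2_append (a s s' : Letter) (t t' : Tgt) (p q : Word) :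
    gen (.fam2 a s t (p ++ [s'] ++ q)) = gen (.fam2 a s t (p ++ tw t' ++ q)) :=
  add_right_cancel ((gen_add_gen (.r12 a s s' t t' p q)).trans (add_comm _ _))

theorem gen_fam2_eq (a s : Letter) (t : Tgt) (u : Word) :
    gen (.fam2 a s t u) = gen (.fam2 a s t (if u.isEmpty then [] else [x])) := by
  cases u with
  | nil => rfl
  | cons l u =>
    exact apply_eq_apply_singleton_of_split_invariant
      (fun w : {w : Word // w ≠ []} => gen (.fam2 a s t w))
      (fun s' b c q => gen_fam2_append a s s' t (b, c) [] q) ⟨l :: u, by simp⟩ x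

theorem gen_fam3_append (c : G3) (s : Letter) (t : Tgt) (p q : Word) :
    gen (.fam3 c ⟨p ++ [s] ++ q, by simp⟩) = gen (.fam3 c ⟨p ++ tw t ++ q, by simp [tw]⟩) +
      sign c • (gen (.fam2 x s t q) - gen (.fam2 v s t q)) := by
  cases c with
  | xvv => linear_combination (norm := (simp only [sign]; module)) -gen_add_gen (.r3 s t p q)
  | xvx => linear_combination (norm := (simp only [sign]; module)) -gen_add_gen (.r4 s t p q)
  | vxx => linear_combination (norm := (simp only [sign]; module)) -gen_add_gen (.r5 s t p q)
  | vxv => linear_combination (norm := (simp only [sign]; module)) -gen_add_gen (.r6 s t p q)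

theorem gen_fam3_eq (c : G3) (u : {u : Word // u ≠ []}) :
    gen (.fam3 c u) = gen (.fam3 c ⟨[x], by simp⟩) +
      sign c • (gen (.fam3 .xvv u) - gen (.fam3 .xvv ⟨[x], by simp⟩)) := by
  have hconst := apply_eq_apply_singleton_of_split_invariant
    (fun w => gen (.fam3 c w) - sign c • gen (.fam3 .xvv w))
    (fun s b d q => by
      linear_combination (norm := (simp only [sign, tw, List.nil_append, List.cons_append]; module))
        gen_fam3_append c s (b, d) [] q - sign c • gen_fam3_append .xvv s (b, d) [] q) u x
  linear_combination (norm := module) hconst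

theorem gen_xvv_cons (l : Letter) (u : {u : Word // u ≠ []}) :
    gen (.fam3 .xvv ⟨l :: u, by simp⟩) = gen (.fam3 .xvv u) +
      (gen (.fam3 .xvv ⟨[l, x], by simp⟩) - gen (.fam3 .xvv ⟨[x], by simp⟩)) := by
  have hconst := apply_eq_apply_singleton_of_split_invariant
    (fun w : {w : Word // w ≠ []} => gen (.fam3 .xvv ⟨l :: w, by simp⟩) - gen (.fam3 .xvv w))
    (fun s b d q => by
      linear_combination (norm := (simp only [tw, List.nil_append, List.cons_append]; module))
        gen_fam3_append .xvv s (b, d) [l] q - gen_fam3_append .xvv s (b, d) [] q) u x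
  linear_combination (norm := module) hconst

/-- Indices for the basis of the abelianization: `free i` for family (i); `split s t b` for the
family (ii), where `b` records whether the word is empty; `base c` for the constant
`X_{c, x}` of a family (iii) function; `weight l` and `last` for the weights in
`u ↦ X_{x → vv, u}` of a non-final letter `l` and of a final `v`, where a final `x` has
weight `0`. -/
inductive BasisIndex : Type
  | free : G1 → BasisIndex
  | split : Letter → Tgt → Bool → BasisIndex
  | weight : Letter → BasisIndex
  | last : BasisIndex
  | base : G3 → BasisIndex

/-- The basis of the abelianization of VF, as a plain family: see `BasisIndex`. -/
def basisVec : BasisIndex → Additive (Abelianization VF)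
  | .free i => gen (.fam1 i)
  | .split s t b => gen (.fam2 v s t (if b then [] else [x]))
  | .weight l => gen (.fam3 .xvv ⟨[l, x], by simp⟩) - gen (.fam3 .xvv ⟨[x], by simp⟩)
  | .last => gen (.fam3 .xvv ⟨[v], by simp⟩) - gen (.fam3 .xvv ⟨[x], by simp⟩)
  | .base c => gen (.fam3 c ⟨[x], by simp⟩)

section Span

open Submodule

theorem basisVec_mem_span (i : BasisIndex) : basisVec i ∈ span ℤ (Set.range basisVec) :=
  subset_span ⟨i, rfl⟩

theorem gen_xvv_mem_span (u : {u : Word // u ≠ []}) :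
    gen (.fam3 .xvv u) ∈ span ℤ (Set.range basisVec) := by
  obtain ⟨u, hu⟩ := u
  induction u with
  | nil => exact absurd rfl hu
  | cons l u ih =>
    rcases eq_or_ne u [] with rfl | hu'
    · cases l with
      | x => exact basisVec_mem_span (.base .xvv)
      | v =>
        rw [← sub_add_cancel (gen (.fam3 .xvv ⟨[v], hu⟩)) (gen (.fam3 .xvv ⟨[x], by simp⟩))]
        exact add_mem (basisVec_mem_span .last) (basisVec_mem_span (.base .xvv))
    · rw [gen_xvv_cons l ⟨u, hu'⟩]
      exact add_mem (ih hu') (basisVec_mem_span (.weight l))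

theorem gen_fam3_mem_span (c : G3) (u : {u : Word // u ≠ []}) :
    gen (.fam3 c u) ∈ span ℤ (Set.range basisVec) := by
  rw [gen_fam3_eq]
  exact add_mem (basisVec_mem_span (.base c))
    (smul_mem _ _ (sub_mem (gen_xvv_mem_span u) (gen_xvv_mem_span _)))

theorem gen_fam2_v_mem_span (s : Letter) (t : Tgt) (u : Word) :
    gen (.fam2 v s t u) ∈ span ℤ (Set.range basisVec) := by
  rw [gen_fam2_eq]
  exact basisVec_mem_span (.split s t u.isEmpty)

theorem gen_fam2_x_mem_span (s : Letter) (t : Tgt) (u : Word) :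
    gen (.fam2 x s t u) ∈ span ℤ (Set.range basisVec) := by
  have hx : gen (.fam2 x s t u) = gen (.fam2 v s t u) + (gen (.fam3 .xvv ⟨[s] ++ u, by simp⟩) -
      gen (.fam3 .xvv ⟨tw t ++ u, by simp [tw]⟩)) := by
    linear_combination (norm := (simp only [sign, List.nil_append]; module))
      -gen_fam3_append .xvv s t [] u
  rw [hx]
  exact add_mem (gen_fam2_v_mem_span s t u)
    (sub_mem (gen_xvv_mem_span _) (gen_xvv_mem_span _))

theorem gen_mem_span : ∀ g : Gen, gen g ∈ span ℤ (Set.range basisVec)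
  | .fam1 i => basisVec_mem_span (.free i)
  | .fam2 x s t u => gen_fam2_x_mem_span s t u
  | .fam2 v s t u => gen_fam2_v_mem_span s t u
  | .fam3 c u => gen_fam3_mem_span c u

theorem span_range_basisVec : span ℤ (Set.range basisVec) = ⊤ :=
  eq_top_iff.2 fun y _ =>
    mem_of_forall_abelianization_of_mem (span ℤ (Set.range basisVec)).toAddSubgroup gen_mem_span y

end Span

section Extension

variable {M : Type*} [AddCommGroup M] (f : BasisIndex → M)

/-- The value on `X_{x → vv, u}`, up to a constant, of the homomorphism taking the values `f` on
the basis. -/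
def potential : Word → M :=
  weightSum (fun l => f (.weight l)) fun
    | x => 0
    | v => f .last

/-- The value on `X_{x, s → t, q} - X_{v, s → t, q}` of the homomorphism taking the values `f` on
the basis, as dictated by relation R3 with `p` empty. -/
def splitDefect (s : Letter) (t : Tgt) (q : Word) : M :=
  potential f ([s] ++ q) - potential f (tw t ++ q)

theorem potential_append (s : Letter) (t : Tgt) (p q : Word) :
    potential f (p ++ [s] ++ q) = potential f (p ++ tw t ++ q) + splitDefect f s t q := by
  rw [← sub_eq_iff_eq_add', List.append_assoc, List.append_assoc]
  exact weightSum_append_sub_weightSum_append _ _ p (by simp) (by simp [tw])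

theorem splitDefect_of_ne_nil (s : Letter) (t : Tgt) {q : Word} (hq : q ≠ []) :
    splitDefect f s t q = f (.weight s) - f (.weight t.1) - f (.weight t.2) := by
  simp only [splitDefect, potential, tw, List.cons_append, List.nil_append,
    weightSum_cons _ _ _ hq, weightSum_cons _ _ t.1 (List.cons_ne_nil t.2 q)]
  abel

/-- The values on the generators of the homomorphism taking the values `f` on the basis. -/
def genValue : Gen → M
  | .fam1 i => f (.free i)
  | .fam2 x s t u => f (.split s t u.isEmpty) + splitDefect f s t u
  | .fam2 v s t u => f (.split s t u.isEmpty)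
  | .fam3 c u => f (.base c) + sign c • potential f u

theorem genValue_fam2_congr (a s : Letter) (t : Tgt) {u w : Word} (hu : u ≠ []) (hw : w ≠ []) :
    genValue f (.fam2 a s t u) = genValue f (.fam2 a s t w) := by
  have hempty : u.isEmpty = w.isEmpty := by
    rw [List.isEmpty_eq_false_iff.2 hu, List.isEmpty_eq_false_iff.2 hw]
  cases a <;> simp only [genValue, hempty, splitDefect_of_ne_nil f s t hu,
    splitDefect_of_ne_nil f s t hw]

theorem lift_genValue_eq_one :
    ∀ r ∈ VFrels, FreeGroup.lift (fun g => Multiplicative.ofAdd (genValue f g)) r = 1 := by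
  rintro _ (⟨a, s, s', t, t', p, q⟩ | ⟨s, t, p, q⟩ | ⟨s, t, p, q⟩ | ⟨s, t, p, q⟩ | ⟨s, t, p, q⟩)
  all_goals refine (lift_ofAdd_mul_mul_inv_eq_one_iff (genValue f) _ _ _ _).2 ?_
  case r12 =>
    rw [add_comm, genValue_fam2_congr f a s t (u := p ++ [s'] ++ q) (w := p ++ tw t' ++ q)
      (by simp) (by simp [tw])]
  all_goals
    simp only [genValue, sign, potential_append f s t p q]
    module

/-- The homomorphism on the abelianization of VF taking the values `f` on the basis. -/
def extend : Additive (Abelianization VF) →+ M :=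
  (Abelianization.lift (PresentedGroup.toGroup (lift_genValue_eq_one f))).toAdditiveLeft

theorem extend_gen (g : Gen) : extend f (gen g) = genValue f g := by
  simp [extend, gen]

theorem extend_basisVec (i : BasisIndex) : extend f (basisVec i) = f i := by
  cases i with
  | split s t b => cases b <;> simp [basisVec, extend_gen, genValue]
  | _ => simp [basisVec, extend_gen, genValue, sign, potential, weightSum]

end Extension

theorem linearIndependent_basisVec : LinearIndependent ℤ basisVec := by
  let φ := (extend fun i => Finsupp.single i (1 : ℤ)).toIntLinearMap
  have hφ : φ ∘ basisVec = fun i => Finsupp.single i 1 := funext (extend_basisVec _)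
  refine .of_comp φ ?_
  rw [hφ]
  exact Finsupp.linearIndependent_single_one ℤ BasisIndex

/-- The basis `basisVec` of the abelianization of VF, with 26 elements. -/
noncomputable def abelianizationBasis :
    Module.Basis BasisIndex ℤ (Additive (Abelianization VF)) :=
  .mk linearIndependent_basisVec span_range_basisVec.ge

end VF

/-- The abelianization of VF is free abelian: it is isomorphic to a direct sum of
copies of ℤ (indexed by some type ι). -/
theorem VF_abelianization_free_abelian :
    ∃ ι : Type, Nonempty (Additive (Abelianization VF) ≃+ (ι →₀ ℤ)) := by
  exact ⟨VF.BasisIndex, ⟨VF.abelianizationBasis.repr.toAddEquiv⟩⟩
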